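/- For every n ≥ 4, the subgroup ⟨S_n({123, 132, 213, 231})⟩ of S_n is isomorphic to the dihedral group D_4 of order 8; indeed, S_n({123, 132, 213, 231}) = {ψ_n, (1,2)∘ψ_n}, where (1,2)∘ψ_n is an element of order 4. -/

import Mathlib

/-- A permutation `π ∈ S_n` contains the pattern `τ ∈ S_k` if there is a strictly
increasing `f : Fin k → Fin n` such that `τ a < τ b ↔ π (f a) < π (f b)`. -/
def PermContains {k n : ℕ} (τ : Equiv.Perm (Fin k)) (π : Equiv.Perm (Fin n)) : Prop :=
  ∃ f : Fin k → Fin n, StrictMono f ∧ ∀ a b : Fin k, τ a < τ b ↔ π (f a) < π (f b)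

/-- `avoidSet n T` is `S_n(T)`: the permutations of `Fin n` avoiding every pattern in `T`,
where `T` is a set of permutations of arbitrary lengths. -/
def avoidSet (n : ℕ) (T : Set (Σ k : ℕ, Equiv.Perm (Fin k))) : Set (Equiv.Perm (Fin n)) :=
  {π | ∀ τ ∈ T, ¬ PermContains τ.2 π}
def p123 : Equiv.Perm (Fin 3) := 1
def p132 : Equiv.Perm (Fin 3) := Equiv.swap 1 2
def p213 : Equiv.Perm (Fin 3) := Equiv.swap 0 1
def p231 : Equiv.Perm (Fin 3) := finRotate 3

section Dihedral

variable {G : Type*} [Group G] {n : ℕ} {a g : G}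

lemma zpow_mul_eq_mul_zpow_neg (ha : a * a = 1) (hag : a * g * a = g⁻¹) (k : ℤ) :
    g ^ k * a = a * g ^ (-k) := by
  have ha' : a⁻¹ = a := inv_eq_of_mul_eq_one_left ha
  have h : a * g ^ k * a = g ^ (-k) := by
    have := conj_zpow (a := a) (b := g) (i := k)
    rw [ha', hag] at this
    rw [← this, zpow_neg, inv_zpow]
  rw [← h]
  simp only [← mul_assoc, ha, one_mul]

lemma zpow_intCast_cast (hg : g ^ n = 1) (k : ℤ) : g ^ ((k : ZMod n).cast : ℤ) = g ^ k := by
  rw [zpow_eq_zpow_iff_modEq]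
  refine Int.ModEq.of_dvd (Int.natCast_dvd_natCast.2 (orderOf_dvd_of_pow_eq_one hg)) ?_
  rw [← ZMod.intCast_eq_intCast_iff]
  simp

/-- The homomorphism from a dihedral group sending the generating rotation to `g` and the
reflection `sr 0` to `a`. -/
def dihedralLift (hg : g ^ n = 1) (ha : a * a = 1) (hag : a * g * a = g⁻¹) :
    DihedralGroup n →* G where
  toFun
    | .r i => g ^ (i.cast : ℤ)
    | .sr i => a * g ^ (i.cast : ℤ)
  map_one' := by
    change g ^ ((0 : ZMod n).cast : ℤ) = 1
    simp
  map_mul' := by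
    have hz := zpow_intCast_cast hg
    have hc := zpow_mul_eq_mul_zpow_neg ha hag
    rintro (x | x) (y | y) <;> obtain ⟨x, rfl⟩ := ZMod.intCast_surjective x <;>
      obtain ⟨y, rfl⟩ := ZMod.intCast_surjective y
    · simp only [DihedralGroup.r_mul_r, ← Int.cast_add, hz, zpow_add]
    · simp only [DihedralGroup.r_mul_sr, ← Int.cast_sub, hz]
      rw [← mul_assoc, hc, mul_assoc, ← zpow_add, neg_add_eq_sub]
    · simp only [DihedralGroup.sr_mul_r, ← Int.cast_add, hz, zpow_add, mul_assoc]
    · simp only [DihedralGroup.sr_mul_sr, ← Int.cast_sub, hz]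
      rw [← mul_assoc, mul_assoc a, hc, ← mul_assoc, ha, one_mul, ← zpow_add, neg_add_eq_sub]

lemma dihedralLift_injective (hn : 2 < n) (hg : orderOf g = n) (ha : a * a = 1)
    (hag : a * g * a = g⁻¹) :
    Function.Injective (dihedralLift (hg ▸ pow_orderOf_eq_one g) ha hag) := by
  rw [injective_iff_map_eq_one]
  rintro (x | x) h
  · obtain ⟨k, rfl⟩ := ZMod.intCast_surjective x
    change g ^ (((k : ZMod n)).cast : ℤ) = 1 at h
    rw [zpow_intCast_cast (hg ▸ pow_orderOf_eq_one g), ← orderOf_dvd_iff_zpow_eq_one, hg,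
      ← ZMod.intCast_zmod_eq_zero_iff_dvd] at h
    rw [DihedralGroup.one_def, h]
  · change a * g ^ (x.cast : ℤ) = 1 at h
    have hcomm : Commute a g := by
      rw [eq_inv_of_mul_eq_one_left h]
      exact ((Commute.refl g).zpow_left _).inv_left
    rw [hcomm.eq, mul_assoc, ha, mul_one] at hag
    have h2 : g ^ 2 = 1 := by
      rw [pow_two]
      nth_rewrite 1 [hag]
      exact inv_mul_cancel g
    have := Nat.le_of_dvd two_pos (orderOf_dvd_of_pow_eq_one h2)
    omega

lemma dihedralLift_range (hg : g ^ n = 1) (ha : a * a = 1) (hag : a * g * a = g⁻¹) :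
    (dihedralLift hg ha hag).range = Subgroup.closure {a, g} := by
  have hga : a ∈ Subgroup.closure {a, g} := Subgroup.subset_closure (by simp)
  have hgg : g ∈ Subgroup.closure {a, g} := Subgroup.subset_closure (by simp)
  apply le_antisymm
  · rintro _ ⟨x | x, rfl⟩
    · exact zpow_mem hgg _
    · exact mul_mem hga (zpow_mem hgg _)
  · rw [Subgroup.closure_le]
    rintro x (hx | hx) <;> rw [hx]
    · refine ⟨.sr ((0 : ℤ) : ZMod n), ?_⟩
      change a * g ^ ((((0 : ℤ) : ZMod n)).cast : ℤ) = _
      rw [zpow_intCast_cast hg, zpow_zero, mul_one]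
    · refine ⟨.r ((1 : ℤ) : ZMod n), ?_⟩
      change g ^ ((((1 : ℤ) : ZMod n)).cast : ℤ) = _
      rw [zpow_intCast_cast hg, zpow_one]

/-- Two elements satisfying the dihedral relations generate a dihedral group. -/
lemma nonempty_closure_mulEquiv_dihedralGroup (hn : 2 < n) (hg : orderOf g = n) (ha : a * a = 1)
    (hag : a * g * a = g⁻¹) :
    Nonempty (Subgroup.closure {a, g} ≃* DihedralGroup n) :=
  ⟨((MonoidHom.ofInjective (dihedralLift_injective hn hg ha hag)).trans
    (MulEquiv.subgroupCongr (dihedralLift_range _ ha hag))).symm⟩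

end Dihedral

lemma Equiv.Perm.eq_revPerm_of_strictAnti {n : ℕ} {π : Equiv.Perm (Fin n)} (h : StrictAnti π) :
    π = Fin.revPerm := by
  refine Equiv.ext fun i => ?_
  have h1 : StrictMono (Fin.rev ∘ π) := Fin.rev_strictAnti.comp h
  have h2 : Fin.rev ∘ π = id := (StrictMono.range_inj h1 strictMono_id).1
    (by simp [Set.range_comp, π.surjective.range_eq, Fin.rev_surjective.range_eq])
  rw [Fin.revPerm_apply, ← Fin.rev_rev (π i)]
  exact congrArg Fin.rev (congrFun h2 i)

lemma permContains_three {n : ℕ} (τ : Equiv.Perm (Fin 3)) (π : Equiv.Perm (Fin n)) :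
    PermContains τ π ↔ ∃ i j k : Fin n, i < j ∧ j < k ∧ (τ 0 < τ 1 ↔ π i < π j) ∧
      (τ 0 < τ 2 ↔ π i < π k) ∧ (τ 1 < τ 2 ↔ π j < π k) := by
  constructor
  · rintro ⟨f, hf, h⟩
    exact ⟨f 0, f 1, f 2, hf (by decide), hf (by decide), h _ _, h _ _, h _ _⟩
  · rintro ⟨i, j, k, hij, hjk, h01, h02, h12⟩
    have flip : ∀ {a b : Fin 3} {x y : Fin n}, a ≠ b → x < y → (τ a < τ b ↔ π x < π y) →
        (τ b < τ a ↔ π y < π x) := fun {a b x y} hab hxy h => by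
      have h1 : τ a ≠ τ b := τ.injective.ne hab
      have h2 : π x ≠ π y := π.injective.ne hxy.ne
      rw [← not_le, ← not_le, h1.le_iff_lt, h2.le_iff_lt, h]
    refine ⟨![i, j, k], ?_, ?_⟩
    · rw [Fin.strictMono_iff_lt_succ]
      intro a
      fin_cases a
      · exact hij
      · exact hjk
    · have h10 := flip (by decide) hij h01
      have h20 := flip (by decide) (hij.trans hjk) h02
      have h21 := flip (by decide) hjk h12
      intro a b
      fin_cases a <;> fin_cases b <;> simp <;> assumption

lemma mem_avoidSet_iff {n : ℕ} (π : Equiv.Perm (Fin n)) :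
    π ∈ avoidSet n {⟨3, p123⟩, ⟨3, p132⟩, ⟨3, p213⟩, ⟨3, p231⟩} ↔
      ∀ i j k : Fin n, i < j → j < k → π j < π i ∧ π k < π i := by
  have hmem : π ∈ avoidSet n {⟨3, p123⟩, ⟨3, p132⟩, ⟨3, p213⟩, ⟨3, p231⟩} ↔
      ¬ PermContains p123 π ∧ ¬ PermContains p132 π ∧ ¬ PermContains p213 π ∧
        ¬ PermContains p231 π := by
    simp [avoidSet]
  have e123 : p123 0 < p123 1 ∧ p123 0 < p123 2 ∧ p123 1 < p123 2 := by decide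
  have e132 : p132 0 < p132 1 ∧ p132 0 < p132 2 ∧ ¬ p132 1 < p132 2 := by decide
  have e213 : ¬ p213 0 < p213 1 ∧ p213 0 < p213 2 ∧ p213 1 < p213 2 := by decide
  have e231 : p231 0 < p231 1 ∧ ¬ p231 0 < p231 2 ∧ ¬ p231 1 < p231 2 := by decide
  simp only [hmem, permContains_three, e123, e132, e213, e231, true_iff, false_iff, not_exists]
  constructor
  · rintro ⟨h1, h2, h3, h4⟩ i j k hij hjk
    have nij : π i ≠ π j := π.injective.ne hij.ne
    have nik : π i ≠ π k := π.injective.ne (hij.trans hjk).ne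
    have njk : π j ≠ π k := π.injective.ne hjk.ne
    specialize h1 i j k
    specialize h2 i j k
    specialize h3 i j k
    specialize h4 i j k
    grind
  · intro h
    refine ⟨?_, ?_, ?_, ?_⟩ <;> intro i j k <;> have := h i j k <;> grind

lemma swap_mul_revPerm {n : ℕ} (x y : Fin n) :
    Equiv.swap x y * Fin.revPerm = Fin.revPerm * Equiv.swap x.rev y.rev := by
  rw [Equiv.mul_swap_eq_swap_mul]
  simp

lemma avoidSet_eq {n : ℕ} (hn : 4 ≤ n) {u v : Fin n} (hu : (u : ℕ) = 0) (hv : (v : ℕ) = 1) :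
    avoidSet n {⟨3, p123⟩, ⟨3, p132⟩, ⟨3, p213⟩, ⟨3, p231⟩} =
      {Fin.revPerm, Equiv.swap u v * Fin.revPerm} := by
  ext π
  rw [mem_avoidSet_iff, Set.mem_insert_iff, Set.mem_singleton_iff]
  have hu' : (u.rev : ℕ) = n - 1 := by simp [hu, Fin.val_rev]
  have hv' : (v.rev : ℕ) = n - 2 := by simp [hv, Fin.val_rev]
  constructor
  · intro h
    have key : ∀ i j : Fin n, i < j → i ≠ v.rev → π j < π i := by
      intro i j hij hi
      rcases eq_or_ne j u.rev with rfl | hj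
      · exact (h i v.rev u.rev (by grind) (by grind)).2
      · exact (h i j u.rev hij (by grind)).1
    rcases lt_or_gt_of_ne (π.injective.ne (show v.rev ≠ u.rev by grind)) with hlt | hlt
    · right
      have : StrictAnti (π * Equiv.swap u.rev v.rev) := by
        intro i j hij
        have h1 := key i j hij
        simp only [Equiv.Perm.mul_apply, Equiv.swap_apply_def]
        grind
      rw [swap_mul_revPerm, ← Equiv.Perm.eq_revPerm_of_strictAnti this, mul_assoc,
        Equiv.swap_mul_self, mul_one]
    · left
      refine Equiv.Perm.eq_revPerm_of_strictAnti fun i j hij => ?_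
      have h1 := key i j hij
      grind
  · rintro (rfl | rfl) i j k hij hjk
    · simp only [Fin.revPerm_apply, Fin.rev_lt_rev]
      exact ⟨hij, hij.trans hjk⟩
    · simp only [Equiv.Perm.mul_apply, Fin.revPerm_apply, Equiv.swap_apply_def, Fin.lt_def]
      grind

lemma orderOf_swap_mul_revPerm {n : ℕ} (hn : 4 ≤ n) {u v : Fin n} (hu : (u : ℕ) = 0)
    (hv : (v : ℕ) = 1) :
    orderOf (Equiv.swap u v * (Fin.revPerm : Equiv.Perm (Fin n))) = 4 := by
  have hu' : (u.rev : ℕ) = n - 1 := by simp [hu, Fin.val_rev]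
  have hv' : (v.rev : ℕ) = n - 2 := by simp [hv, Fin.val_rev]
  have hrev : (Fin.revPerm : Equiv.Perm (Fin n)) * Fin.revPerm = 1 := by ext; simp
  have hsq : (Equiv.swap u v * (Fin.revPerm : Equiv.Perm (Fin n))) ^ 2 =
      Equiv.swap u v * Equiv.swap u.rev v.rev := by
    rw [pow_two]
    nth_rewrite 2 [swap_mul_revPerm]
    rw [mul_assoc, ← mul_assoc Fin.revPerm, hrev, one_mul]
  have hcomm : Commute (Equiv.swap u v) (Equiv.swap u.rev v.rev) := by
    refine (Equiv.Perm.disjoint_iff_eq_or_eq.2 fun i => ?_).commute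
    simp only [Equiv.swap_apply_def]
    grind
  refine orderOf_eq_prime_pow (p := 2) (n := 1) ?_ ?_
  · rw [pow_one, hsq]
    intro h
    have := congrArg (fun σ : Equiv.Perm (Fin n) => σ u) h
    simp only [Equiv.Perm.mul_apply, Equiv.swap_apply_def, Equiv.Perm.one_apply] at this
    grind
  · rw [show 2 ^ (1 + 1) = 2 * 2 from rfl, pow_mul, hsq, hcomm.mul_pow, pow_two, pow_two,
      Equiv.swap_mul_self, Equiv.swap_mul_self, mul_one]

theorem avoid_123_132_213_231_dihedral4 (n : ℕ) (hn : 4 ≤ n) :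
    avoidSet n ({⟨3, p123⟩, ⟨3, p132⟩, ⟨3, p213⟩, ⟨3, p231⟩} :
        Set (Σ k : ℕ, Equiv.Perm (Fin k))) =
      ({Fin.revPerm,
        Equiv.swap (⟨0, by omega⟩ : Fin n) (⟨1, by omega⟩ : Fin n) * Fin.revPerm} :
        Set (Equiv.Perm (Fin n))) ∧
    orderOf (Equiv.swap (⟨0, by omega⟩ : Fin n) (⟨1, by omega⟩ : Fin n) *
      (Fin.revPerm : Equiv.Perm (Fin n))) = 4 ∧
    Nonempty (Subgroup.closure
      (avoidSet n ({⟨3, p123⟩, ⟨3, p132⟩, ⟨3, p213⟩, ⟨3, p231⟩} :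
        Set (Σ k : ℕ, Equiv.Perm (Fin k)))) ≃* DihedralGroup 4) := by
  refine ⟨avoidSet_eq hn rfl rfl, orderOf_swap_mul_revPerm hn rfl rfl, ?_⟩
  have hrev : (Fin.revPerm : Equiv.Perm (Fin n)) * Fin.revPerm = 1 := by ext; simp
  rw [avoidSet_eq hn (u := ⟨0, by omega⟩) (v := ⟨1, by omega⟩) rfl rfl]
  refine nonempty_closure_mulEquiv_dihedralGroup (by norm_num)
    (orderOf_swap_mul_revPerm hn rfl rfl) hrev ?_
  rw [mul_assoc, mul_assoc, hrev, mul_one, mul_inv_rev, Equiv.swap_inv,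
    inv_eq_of_mul_eq_one_left hrev]
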